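/- The set of normalized B-almost harmonic vectors is a convex subset of [0,∞)^V whose set of extreme points is exactly {φ^C : C a B-harmonic component of B} ∪ {φ^s : s a B-summable sink}. -/

import Mathlib

open Filter Finset

/-- The spectral radius of a real matrix, `ρ(M) = lim_n ‖Mⁿ‖^{1/n}`
(computed with the entrywise ℓ¹-norm, and as a `limsup` so that it is always defined;
it is `0` for the matrix over the empty index type). -/
noncomputable def specRad {n : Type*} [Fintype n] [DecidableEq n] (M : Matrix n n ℝ) : ℝ :=
  Filter.limsup (fun k : ℕ => (∑ i, ∑ j, |(M ^ k) i j|) ^ ((1 : ℝ) / (k : ℝ))) Filter.atTop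

/-- The spectral radius `ρ(B^S)` of the submatrix of `B` obtained by restricting to `S × S`. -/
noncomputable def specRadOn {V : Type*} [Fintype V] (B : Matrix V V ℝ) (S : Set V) : ℝ :=
  letI : Fintype S := (Set.toFinite S).fintype
  letI : DecidableEq S := Classical.decEq _
  specRad (fun i j : S => B i.1 j.1)

variable {V : Type*} [Fintype V]

/-- A vertex `s` is a sink for `B` when the row of `B` at `s` vanishes. -/
def IsSink (B : Matrix V V ℝ) (s : V) : Prop := ∀ w, B s w = 0

/-- `ψ` is `B`-harmonic: `Σ_w B v w * ψ w = ψ v` for all `v`. -/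
def IsHarmonic (B : Matrix V V ℝ) (ψ : V → ℝ) : Prop :=
  ∀ v, ∑ w, B v w * ψ w = ψ v

/-- `ψ` is almost `B`-harmonic: `Σ_w B v w * ψ w = ψ v` for all `v` that are not sinks. -/
def IsAlmostHarmonic (B : Matrix V V ℝ) (ψ : V → ℝ) : Prop :=
  ∀ v, ¬ IsSink B v → ∑ w, B v w * ψ w = ψ v

/-- A sink `s` is `B`-summable when `Σ_n (Bⁿ)_{v s} < ∞` for all `v`. -/
def IsSummableSink [DecidableEq V] (B : Matrix V V ℝ) (s : V) : Prop :=
  IsSink B s ∧ ∀ v, Summable (fun n : ℕ => (B ^ n) v s)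

/-- The vector `φ^s` associated to a `B`-summable sink `s`. -/
noncomputable def phiSink [DecidableEq V] (B : Matrix V V ℝ) (s : V) : V → ℝ :=
  fun v => (∑' n : ℕ, (B ^ n) v s) / (∑ w, ∑' n : ℕ, (B ^ n) w s)

/-- `v ⤳ w`: `(Bⁿ)_{vw} > 0` for some `n ≥ 0`. -/
def Reaches [DecidableEq V] (B : Matrix V V ℝ) (v w : V) : Prop :=
  ∃ n : ℕ, 0 < (B ^ n) v w

/-- The closure of a set of vertices: all vertices that reach it. -/
def closureSet [DecidableEq V] (B : Matrix V V ℝ) (F : Set V) : Set V :=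
  {v | ∃ w ∈ F, Reaches B v w}

/-- A component: an equivalence class of `∼` on which `B` is nonzero. -/
def IsComponent [DecidableEq V] (B : Matrix V V ℝ) (C : Set V) : Prop :=
  (∃ v, C = {w | Reaches B v w ∧ Reaches B w v}) ∧
  ∃ v ∈ C, ∃ w ∈ C, B v w ≠ 0

/-- A `B`-harmonic component. -/
def IsHarmonicComponent [DecidableEq V] (B : Matrix V V ℝ) (C : Set V) : Prop :=
  IsComponent B C ∧ specRadOn B C = 1 ∧
  ((closureSet B C \ C).Nonempty → specRadOn B (closureSet B C \ C) < 1)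

/-- The property characterizing the vector `φ^C` of a `B`-harmonic component `C`. -/
def IsPhiC [DecidableEq V] (B : Matrix V V ℝ) (C : Set V) (φ : V → ℝ) : Prop :=
  (∀ v, 0 ≤ φ v) ∧ (∑ v, φ v = 1) ∧ IsHarmonic B φ ∧
  (∀ v ∈ C, ∑ w, Set.indicator C (fun w => B v w * φ w) w = φ v) ∧
  (∀ v, φ v ≠ 0 ↔ v ∈ closureSet B C)

open scoped Classical in
/-- The vector `φ^C` of a `B`-harmonic component `C` (defined by choice; for a `B`-harmonic
component it is unique). -/
noncomputable def phiComp [DecidableEq V] (B : Matrix V V ℝ) (C : Set V) : V → ℝ :=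
  if h : ∃ φ : V → ℝ, IsPhiC B C φ then h.choose else 0

section helpers

/-- The entrywise l1 norm of a power. -/
noncomputable def ahNorm {n : Type*} [Fintype n] (M : Matrix n n ℝ) : ℝ := ∑ i, ∑ j, |M i j|

lemma ahNorm_nonneg {n : Type*} [Fintype n] (M : Matrix n n ℝ) : 0 ≤ ahNorm M :=
  Finset.sum_nonneg fun _ _ => Finset.sum_nonneg fun _ _ => abs_nonneg _

lemma le_ahNorm {n : Type*} [Fintype n] (M : Matrix n n ℝ) (i j : n) : |M i j| ≤ ahNorm M :=
  (Finset.single_le_sum (f := fun j => |M i j|) (fun _ _ => abs_nonneg _) (Finset.mem_univ j)).trans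
    (Finset.single_le_sum (f := fun i => ∑ j, |M i j|)
      (fun _ _ => Finset.sum_nonneg fun _ _ => abs_nonneg _) (Finset.mem_univ i))

lemma ahNorm_mul_le {n : Type*} [Fintype n] (M N : Matrix n n ℝ) :
    ahNorm (M * N) ≤ ahNorm M * ahNorm N := by
  have h1 : ahNorm (M * N) ≤ ∑ i, ∑ j, ∑ k, |M i k| * |N k j| := by
    refine Finset.sum_le_sum fun i _ => Finset.sum_le_sum fun j _ => ?_
    rw [Matrix.mul_apply]
    refine (Finset.abs_sum_le_sum_abs _ _).trans (le_of_eq ?_)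
    simp [abs_mul]
  refine h1.trans ?_
  unfold ahNorm
  rw [Finset.sum_mul]
  refine Finset.sum_le_sum fun i _ => ?_
  rw [Finset.sum_comm, Finset.sum_mul]
  refine Finset.sum_le_sum fun k _ => ?_
  rw [← Finset.mul_sum]
  refine mul_le_mul_of_nonneg_left ?_ (abs_nonneg _)
  exact Finset.single_le_sum (f := fun i => ∑ j, |N i j|)
      (fun _ _ => Finset.sum_nonneg fun _ _ => abs_nonneg _) (Finset.mem_univ k)

lemma ahNorm_pow_le {n : Type*} [Fintype n] [DecidableEq n] (M : Matrix n n ℝ) (k : ℕ) :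
    ahNorm (M ^ (k + 1)) ≤ ahNorm M ^ (k + 1) := by
  induction k with
  | zero => simp
  | succ k ih =>
    rw [pow_succ, pow_succ (ahNorm M)]
    exact (ahNorm_mul_le _ _).trans (mul_le_mul_of_nonneg_right ih (ahNorm_nonneg _))

lemma specRad_eq {n : Type*} [Fintype n] [DecidableEq n] (M : Matrix n n ℝ) :
    specRad M = limsup (fun k : ℕ => (ahNorm (M ^ k)) ^ ((1 : ℝ) / (k : ℝ))) atTop := rfl

lemma root_nonneg {n : Type*} [Fintype n] [DecidableEq n] (M : Matrix n n ℝ) (k : ℕ) :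
    0 ≤ (ahNorm (M ^ k)) ^ ((1 : ℝ) / (k : ℝ)) := Real.rpow_nonneg (ahNorm_nonneg _) _

lemma root_le {n : Type*} [Fintype n] [DecidableEq n] (M : Matrix n n ℝ) :
    ∀ᶠ k : ℕ in atTop, (ahNorm (M ^ k)) ^ ((1 : ℝ) / (k : ℝ)) ≤ ahNorm M := by
  filter_upwards [eventually_ge_atTop 1] with k hk
  obtain ⟨j, rfl⟩ : ∃ j, k = j + 1 := ⟨k - 1, by omega⟩
  have := Real.rpow_le_rpow (ahNorm_nonneg _) (ahNorm_pow_le M j)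
    (z := (1 : ℝ) / ((j + 1 : ℕ) : ℝ)) (by positivity)
  refine this.trans (le_of_eq ?_)
  rw [one_div, Real.pow_rpow_inv_natCast (ahNorm_nonneg _) (by omega)]

lemma root_bdd {n : Type*} [Fintype n] [DecidableEq n] (M : Matrix n n ℝ) :
    IsBoundedUnder (· ≤ ·) atTop (fun k : ℕ => (ahNorm (M ^ k)) ^ ((1 : ℝ) / (k : ℝ))) :=
  ⟨_, eventually_map.2 (root_le M)⟩

lemma root_cobdd {n : Type*} [Fintype n] [DecidableEq n] (M : Matrix n n ℝ) :
    IsCoboundedUnder (· ≤ ·) atTop (fun k : ℕ => (ahNorm (M ^ k)) ^ ((1 : ℝ) / (k : ℝ))) :=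
  IsBoundedUnder.isCoboundedUnder_le ⟨0, eventually_map.2 (Eventually.of_forall (root_nonneg M))⟩

lemma specRad_lt {n : Type*} [Fintype n] [DecidableEq n] (M : Matrix n n ℝ) (r : ℝ)
    (h : specRad M < r) : ∀ᶠ k : ℕ in atTop, ahNorm (M ^ k) ≤ r ^ k := by
  rw [specRad_eq] at h
  filter_upwards [eventually_lt_of_limsup_lt h (root_bdd M), eventually_ge_atTop 1] with k hk hk1
  have := pow_le_pow_left₀ (root_nonneg M k) hk.le k
  rwa [one_div, Real.rpow_inv_natCast_pow (ahNorm_nonneg _) (by omega)] at this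

lemma const_root_tendsto (K : ℝ) (hK : 0 < K) :
    Tendsto (fun k : ℕ => K ^ ((1 : ℝ) / (k : ℝ))) atTop (nhds 1) := by
  have h := (Real.continuousAt_const_rpow (a := K) (b := 0) hK.ne').tendsto.comp
    (tendsto_one_div_atTop_nhds_zero_nat (𝕜 := ℝ))
  simpa [Function.comp_def] using h

lemma specRad_le_of {n : Type*} [Fintype n] [DecidableEq n] (M : Matrix n n ℝ) (K r : ℝ)
    (hK : 0 < K) (hr : 0 ≤ r) (h : ∀ᶠ k : ℕ in atTop, ahNorm (M ^ k) ≤ K * r ^ k) :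
    specRad M ≤ r := by
  rw [specRad_eq]
  have ht : Tendsto (fun k : ℕ => K ^ ((1 : ℝ) / (k : ℝ)) * r) atTop (nhds r) := by
    simpa using (const_root_tendsto K hK).mul_const r
  rw [← ht.limsup_eq]
  refine limsup_le_limsup ?_ (root_cobdd M) ht.isBoundedUnder_le
  filter_upwards [h, eventually_ge_atTop 1] with k hk hk1
  have := Real.rpow_le_rpow (ahNorm_nonneg _) hk (z := (1 : ℝ) / (k : ℝ)) (by positivity)
  refine this.trans (le_of_eq ?_)
  rw [Real.mul_rpow hK.le (by positivity)]
  congr 1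
  rw [one_div, Real.pow_rpow_inv_natCast hr (by omega)]

lemma one_le_specRad_of {n : Type*} [Fintype n] [DecidableEq n] (M : Matrix n n ℝ) (c : ℝ)
    (hc : 0 < c) (h : ∀ k : ℕ, c ≤ ahNorm (M ^ k)) :
    1 ≤ specRad M := by
  rw [specRad_eq]
  have ht := const_root_tendsto c hc
  refine ht.limsup_eq.symm.le.trans ?_
  refine limsup_le_limsup ?_ ht.isBoundedUnder_ge.isCoboundedUnder_le (root_bdd M)
  filter_upwards with k
  exact Real.rpow_le_rpow hc.le (h k) (by positivity)

lemma mulVec_mono {M : Matrix V V ℝ} (hM : ∀ v w, 0 ≤ M v w) {f g : V → ℝ}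
    (h : ∀ v, f v ≤ g v) (v : V) : (M.mulVec f) v ≤ (M.mulVec g) v :=
  Finset.sum_le_sum fun w _ => mul_le_mul_of_nonneg_left (h w) (hM v w)

lemma mulVec_nonneg {M : Matrix V V ℝ} (hM : ∀ v w, 0 ≤ M v w) {f : V → ℝ}
    (h : ∀ v, 0 ≤ f v) (v : V) : 0 ≤ (M.mulVec f) v :=
  Finset.sum_nonneg fun w _ => mul_nonneg (hM v w) (h w)

lemma entry_mul_le_mulVec {M : Matrix V V ℝ} (hM : ∀ v w, 0 ≤ M v w) {f : V → ℝ}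
    (h : ∀ v, 0 ≤ f v) (v w : V) : M v w * f w ≤ (M.mulVec f) v :=
  Finset.single_le_sum (f := fun w => M v w * f w) (fun w _ => mul_nonneg (hM v w) (h w))
    (Finset.mem_univ w)

variable [DecidableEq V]

lemma pow_nonneg_entry {M : Matrix V V ℝ} (hM : ∀ v w, 0 ≤ M v w) (k : ℕ) :
    ∀ v w, 0 ≤ (M ^ k) v w := by
  induction k with
  | zero => intro v w; rw [pow_zero, Matrix.one_apply]; split_ifs <;> norm_num
  | succ k ih =>
    intro v w
    rw [pow_succ, Matrix.mul_apply]
    exact Finset.sum_nonneg fun _ _ => mul_nonneg (ih _ _) (hM _ _)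

lemma pow_mulVec_eq {M : Matrix V V ℝ} {f : V → ℝ} (h : M.mulVec f = f) (n : ℕ) :
    (M ^ n).mulVec f = f := by
  induction n with
  | zero => simp
  | succ n ih => rw [pow_succ, ← Matrix.mulVec_mulVec, h, ih]

lemma pow_succ_zero {M : Matrix V V ℝ} {D : Set V}
    (hD : ∀ v w, v ∉ D ∨ w ∉ D → M v w = 0) (k : ℕ) :
    ∀ v w, v ∉ D ∨ w ∉ D → (M ^ (k + 1)) v w = 0 := by
  rintro v w (h | h)
  · rw [pow_succ', Matrix.mul_apply]
    exact Finset.sum_eq_zero fun u _ => by rw [hD v u (Or.inl h), zero_mul]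
  · rw [pow_succ, Matrix.mul_apply]
    exact Finset.sum_eq_zero fun u _ => by rw [hD u w (Or.inr h), mul_zero]

lemma specRad_lt_one_of {M : Matrix V V ℝ} (hM : ∀ v w, 0 ≤ M v w) (D : Set V)
    (hD : ∀ v w, v ∉ D ∨ w ∉ D → M v w = 0) (S g : V → ℝ) (hS : ∀ v, 0 ≤ S v)
    (hg : ∀ v ∈ D, 0 < g v) (h : ∀ v ∈ D, (M.mulVec S) v ≤ S v - g v) : specRad M < 1 := by
  have hSpos : ∀ v ∈ D, 0 < S v := fun v hv => by
    have := mulVec_nonneg hM hS v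
    linarith [h v hv, hg v hv]
  obtain ⟨δ, hδ0, hδ1, hδ⟩ : ∃ δ : ℝ, 0 < δ ∧ δ < 1 ∧ ∀ v ∈ D, δ * S v ≤ g v := by
    have h1 : ∀ᶠ δ : ℝ in nhdsWithin 0 (Set.Ioi 0), ∀ v, v ∈ D → δ * S v ≤ g v := by
      rw [eventually_all]
      intro v
      by_cases hv : v ∈ D
      · have : Tendsto (fun δ : ℝ => δ * S v) (nhdsWithin 0 (Set.Ioi 0)) (nhds (0 * S v)) :=
          (tendsto_id.mul_const _).mono_left nhdsWithin_le_nhds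
        rw [zero_mul] at this
        filter_upwards [this.eventually (gt_mem_nhds (hg v hv))] with δ hδ _
        exact hδ.le
      · exact Eventually.of_forall fun _ h => absurd h hv
    have h2 : ∀ᶠ δ : ℝ in nhdsWithin 0 (Set.Ioi 0), δ < 1 :=
      (gt_mem_nhds (show (0:ℝ) < 1 by norm_num)).filter_mono nhdsWithin_le_nhds
    obtain ⟨δ, a, b, c⟩ := (h1.and (h2.and self_mem_nhdsWithin)).exists
    exact ⟨δ, c, b, a⟩
  have hr0 : 0 ≤ 1 - δ := by linarith
  have hMS : ∀ v, (M.mulVec S) v ≤ ((1 - δ) • S) v := by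
    intro v
    by_cases hv : v ∈ D
    · have := h v hv
      have := hδ v hv
      simp only [Pi.smul_apply, smul_eq_mul]
      linarith
    · have : (M.mulVec S) v = 0 := Finset.sum_eq_zero fun w _ => by
        show M v w * S w = 0
        rw [hD v w (Or.inl hv), zero_mul]
      rw [this]
      exact mul_nonneg hr0 (hS v)
  have hpow : ∀ k : ℕ, ∀ v, ((M ^ k).mulVec S) v ≤ (1 - δ) ^ k * S v := by
    intro k
    induction k with
    | zero => simp
    | succ k ih =>
      intro v
      rw [pow_succ, ← Matrix.mulVec_mulVec]
      refine (mulVec_mono (pow_nonneg_entry hM k) hMS v).trans ?_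
      rw [Matrix.mulVec_smul]
      simp only [Pi.smul_apply, smul_eq_mul]
      rw [pow_succ', mul_assoc]
      exact mul_le_mul_of_nonneg_left (ih v) hr0
  have hsum0 : 0 ≤ ∑ i, ∑ j, S i / S j :=
    Finset.sum_nonneg fun i _ => Finset.sum_nonneg fun j _ => div_nonneg (hS i) (hS j)
  refine lt_of_le_of_lt (specRad_le_of M ((∑ i, ∑ j, S i / S j) + 1) (1 - δ) (by linarith) hr0 ?_)
    (by linarith)
  filter_upwards [eventually_ge_atTop 1] with k hk
  obtain ⟨k, rfl⟩ : ∃ j, k = j + 1 := ⟨k - 1, by omega⟩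
  have : ahNorm (M ^ (k + 1)) ≤ (∑ i, ∑ j, S i / S j) * (1 - δ) ^ (k + 1) := by
    unfold ahNorm
    rw [Finset.sum_mul]
    refine Finset.sum_le_sum fun i _ => ?_
    rw [Finset.sum_mul]
    refine Finset.sum_le_sum fun j _ => ?_
    rw [abs_of_nonneg (pow_nonneg_entry hM _ i j)]
    by_cases hj : j ∈ D
    · have h1 := entry_mul_le_mulVec (pow_nonneg_entry hM (k + 1)) hS i j
      have h2 := h1.trans (hpow (k + 1) i)
      rw [div_mul_eq_mul_div, le_div_iff₀ (hSpos j hj)]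
      linarith
    · rw [pow_succ_zero hD k i j (Or.inr hj)]
      exact mul_nonneg (div_nonneg (hS i) (hS j)) (by positivity)
  refine this.trans (mul_le_mul_of_nonneg_right (by linarith) (by positivity))

lemma summable_of_specRad {M : Matrix V V ℝ} (hM : ∀ v w, 0 ≤ M v w) {r t : ℝ}
    (h : specRad M < r) (hr : 0 ≤ r) (ht : 0 ≤ t) (hrt : t * r < 1) (v w : V) :
    Summable (fun k : ℕ => t ^ k * (M ^ k) v w) := by
  refine Summable.of_norm_bounded_eventually_nat (summable_geometric_of_lt_one (mul_nonneg ht hr) hrt) ?_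
  filter_upwards [specRad_lt M r h] with k hk
  rw [Real.norm_eq_abs, abs_of_nonneg (mul_nonneg (by positivity) (pow_nonneg_entry hM k v w)),
    mul_pow]
  refine mul_le_mul_of_nonneg_left ?_ (by positivity)
  exact ((le_abs_self _).trans (le_ahNorm _ v w)).trans hk

lemma summable_of_specRad_lt_one {M : Matrix V V ℝ} (hM : ∀ v w, 0 ≤ M v w)
    (h : specRad M < 1) (v w : V) :
    Summable (fun k : ℕ => (M ^ k) v w) := by
  obtain ⟨r, h1, h2⟩ := exists_between (max_lt h one_pos)
  simpa using summable_of_specRad hM (t := 1) ((le_max_left _ _).trans_lt h1)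
    ((le_max_right _ _).trans h1.le) one_pos.le (by simpa using h2) v w

lemma neumann {A : Matrix V V ℝ} (v w : V)
    (h : ∀ v, Summable (fun k : ℕ => (A ^ k) v w)) :
    ∑' k : ℕ, (A ^ k) v w = (1 : Matrix V V ℝ) v w + ∑ u, A v u * ∑' k : ℕ, (A ^ k) u w := by
  rw [(h v).tsum_eq_zero_add, pow_zero]
  congr 1
  have : ∀ k : ℕ, (A ^ (k + 1)) v w = ∑ u, A v u * (A ^ k) u w := fun k => by
    rw [pow_succ', Matrix.mul_apply]
  simp only [this]
  rw [Summable.tsum_finsetSum fun u _ => (h u).mul_left _]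
  exact Finset.sum_congr rfl fun u _ => tsum_mul_left

lemma perron_exists {M : Matrix V V ℝ} (hM : ∀ v w, 0 ≤ M v w) (h : specRad M = 1) :
    ∃ x : V → ℝ, (∀ v, 0 ≤ x v) ∧ ∑ v, x v = 1 ∧ M.mulVec x = x := by
  have key : ∀ n : ℕ, ∃ x : V → ℝ, x ∈ stdSimplex ℝ V ∧ ∃ c : ℝ, 0 ≤ c ∧ c ≤ 2 * (1 / ((n : ℝ) + 2)) ∧
      ∀ v, x v = c + (1 - 1 / ((n : ℝ) + 2)) * (M.mulVec x) v := by
    intro n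
    set ε : ℝ := 1 / ((n : ℝ) + 2) with hε
    have hε0 : 0 < ε := by positivity
    have hε1 : ε ≤ 1 / 2 := by
      rw [hε]; gcongr; linarith [(Nat.cast_nonneg n : (0 : ℝ) ≤ n)]
    have ht : 0 < 1 - ε := by linarith
    have hsum : ∀ v w, Summable (fun k : ℕ => (((1 - ε) • M) ^ k) v w) := by
      intro v w
      have := summable_of_specRad hM (t := 1 - ε) (r := 1 + ε) (by linarith) (by linarith) ht.le
        (by nlinarith) v w
      simpa [smul_pow] using this
    have hA : ∀ v w, 0 ≤ ((1 - ε) • M) v w := fun v w => mul_nonneg ht.le (hM v w)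
    set y : V → ℝ := fun v => ∑ w, ∑' k : ℕ, (((1 - ε) • M) ^ k) v w with hy
    have hy0 : ∀ v, 0 ≤ y v := fun v => Finset.sum_nonneg fun w _ =>
      tsum_nonneg fun k => pow_nonneg_entry hA k v w
    have hyeq : ∀ v, y v = 1 + (1 - ε) * (M.mulVec y) v := by
      intro v
      simp only [hy]
      rw [Finset.sum_congr rfl fun w _ => neumann v w (fun v => hsum v w),
        Finset.sum_add_distrib]
      congr 1
      · simp [Matrix.one_apply]
      · rw [Finset.sum_comm]
        simp only [Matrix.mulVec, dotProduct, Finset.mul_sum, Matrix.smul_apply, smul_eq_mul,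
          mul_assoc]
    have hex : ∃ v, 1 / 2 < ε * y v := by
      by_contra hcon
      push Not at hcon
      have := specRad_lt_one_of hM Set.univ (by simp) y (fun _ => 1 / 2) hy0 (by norm_num) ?_
      · linarith
      · intro v _
        have h1 := hyeq v
        have h2 := hcon v
        nlinarith
    obtain ⟨v, hv⟩ := hex
    have hY : y v ≤ ∑ w, y w := Finset.single_le_sum (fun w _ => hy0 w) (Finset.mem_univ v)
    set Y := ∑ w, y w with hYd
    have hYpos : 0 < Y := by
      have : 0 < y v := by by_contra hc; nlinarith
      linarith
    refine ⟨Y⁻¹ • y, ⟨fun w => mul_nonneg (by positivity) (hy0 w), ?_⟩, Y⁻¹, by positivity, ?_, ?_⟩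
    · simp only [Pi.smul_apply, smul_eq_mul]
      rw [← Finset.mul_sum, ← hYd, inv_mul_cancel₀ hYpos.ne']
    · rw [inv_le_iff_one_le_mul₀ hYpos]
      nlinarith
    · intro w
      rw [Matrix.mulVec_smul]
      simp only [Pi.smul_apply, smul_eq_mul]
      rw [hyeq w]; ring
  choose x hx c hc0 hc1 hxc using key
  obtain ⟨y, hy, φ, hφ, hlim⟩ := (isCompact_stdSimplex ℝ V).tendsto_subseq hx
  refine ⟨y, hy.1, hy.2, ?_⟩
  have h0 : Tendsto (fun n : ℕ => 1 / ((n : ℝ) + 2)) atTop (nhds 0) := by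
    have h := (tendsto_add_atTop_iff_nat (f := fun n : ℕ => 1 / (n : ℝ)) 2).2
      tendsto_one_div_atTop_nhds_zero_nat
    simpa using h
  have hc : Tendsto c atTop (nhds 0) :=
    squeeze_zero hc0 hc1 (by simpa using h0.const_mul 2)
  funext v
  have hl : ∀ v, Tendsto (fun n => x (φ n) v) atTop (nhds (y v)) := fun v =>
    (tendsto_pi_nhds.1 hlim) v
  have h2 : Tendsto (fun n => (M.mulVec (x (φ n))) v) atTop (nhds ((M.mulVec y) v)) :=
    tendsto_finsetSum _ fun w _ => (hl w).const_mul _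
  have h3 := (hc.comp hφ.tendsto_atTop).add
    (((h0.comp hφ.tendsto_atTop).const_sub 1).mul h2)
  have h4 : (fun n => x (φ n) v) = fun n => (c ∘ φ) n +
    (1 - ((fun n : ℕ => 1 / ((n : ℝ) + 2)) ∘ φ) n) * (M.mulVec (x (φ n))) v :=
    funext fun n => hxc (φ n) v
  have h5 := hl v
  rw [h4] at h5
  have := tendsto_nhds_unique h5 h3
  simp at this
  exact this.symm

set_option linter.unusedSectionVars false
set_option linter.unusedVariables false
set_option linter.style.haveILetI false

open scoped Classical in
/-- The matrix `B` restricted to `S × S`, extended by zero. -/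
noncomputable def restr (B : Matrix V V ℝ) (S : Set V) : Matrix V V ℝ :=
  Matrix.of fun v w => if v ∈ S ∧ w ∈ S then B v w else 0

lemma restr_apply {B : Matrix V V ℝ} {S : Set V} {v w : V} (hv : v ∈ S) (hw : w ∈ S) :
    restr B S v w = B v w := by
  simp [restr, hv, hw]

lemma restr_zero {B : Matrix V V ℝ} {S : Set V} (v w : V) (h : v ∉ S ∨ w ∉ S) :
    restr B S v w = 0 := by
  simp only [restr, Matrix.of_apply]
  rw [if_neg]
  tauto

lemma restr_nonneg {B : Matrix V V ℝ} (hB : ∀ v w, 0 ≤ B v w) (S : Set V) (v w : V) :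
    0 ≤ restr B S v w := by
  simp only [restr, Matrix.of_apply]
  split_ifs
  · exact hB v w
  · exact le_rfl

lemma restr_le {B : Matrix V V ℝ} (hB : ∀ v w, 0 ≤ B v w) (S : Set V) (v w : V) :
    restr B S v w ≤ B v w := by
  simp only [restr, Matrix.of_apply]
  split_ifs
  · exact le_rfl
  · exact hB v w

lemma restr_pow_le {B : Matrix V V ℝ} (hB : ∀ v w, 0 ≤ B v w) (S : Set V) (k : ℕ) :
    ∀ v w, (restr B S ^ k) v w ≤ (B ^ k) v w := by
  induction k with
  | zero => intro v w; simp
  | succ k ih =>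
    intro v w
    rw [pow_succ, pow_succ, Matrix.mul_apply, Matrix.mul_apply]
    exact Finset.sum_le_sum fun u _ => mul_le_mul (ih v u) (restr_le hB S u w)
      (restr_nonneg hB S u w) (pow_nonneg_entry hB k v u)

lemma sum_subtype_zero {S : Set V} [Fintype S] (f : V → ℝ) (hf : ∀ v, v ∉ S → f v = 0) :
    ∑ i : S, f i.1 = ∑ v, f v := by
  classical
  rw [← Finset.sum_filter_add_sum_filter_not Finset.univ (fun v => v ∈ S) f,
    Finset.sum_eq_zero (s := Finset.univ.filter fun v => v ∉ S), add_zero]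
  · exact (Finset.sum_subtype (Finset.univ.filter fun v => v ∈ S) (by simp) f).symm
  · intro v hv
    exact hf v (by simpa using hv)

lemma subm_pow {B : Matrix V V ℝ} {S : Set V} [Fintype S] [DecidableEq S] (k : ℕ) :
    ∀ v w : S, ((B.submatrix Subtype.val Subtype.val : Matrix S S ℝ) ^ k) v w =
      (restr B S ^ k) v.1 w.1 := by
  induction k with
  | zero => intro v w; simp [Matrix.one_apply, Subtype.ext_iff]
  | succ k ih =>
    intro v w
    rw [pow_succ, pow_succ, Matrix.mul_apply, Matrix.mul_apply,
      ← sum_subtype_zero (S := S) (fun u => (restr B S ^ k) v.1 u * restr B S u w.1)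
        (fun u hu => by rw [restr_zero u w.1 (Or.inl hu), mul_zero])]
    refine Finset.sum_congr rfl fun u _ => ?_
    rw [ih v u, restr_apply u.2 w.2, Matrix.submatrix_apply]

lemma specRadOn_eq (B : Matrix V V ℝ) (S : Set V) : specRadOn B S = specRad (restr B S) := by
  letI : Fintype S := (Set.toFinite S).fintype
  letI : DecidableEq S := Classical.decEq _
  show specRad (B.submatrix Subtype.val Subtype.val : Matrix S S ℝ) = _
  rw [specRad_eq, specRad_eq]
  refine limsup_congr ?_
  filter_upwards [eventually_ge_atTop 1] with k hk
  congr 1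
  obtain ⟨k, rfl⟩ : ∃ j, k = j + 1 := ⟨k - 1, by omega⟩
  unfold ahNorm
  rw [← sum_subtype_zero (S := S) (fun i => ∑ j, |(restr B S ^ (k + 1)) i j|)]
  · refine Finset.sum_congr rfl fun i _ => ?_
    rw [← sum_subtype_zero (S := S) (fun j => |(restr B S ^ (k + 1)) i.1 j|)]
    · refine Finset.sum_congr rfl fun j _ => ?_
      congr 1
      exact subm_pow (k + 1) i j
    · intro j hj
      rw [pow_succ_zero restr_zero k i.1 j (Or.inr hj), abs_zero]
  · intro i hi
    exact Finset.sum_eq_zero fun j _ => by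
      rw [pow_succ_zero restr_zero k i j (Or.inl hi), abs_zero]

lemma reaches_self (B : Matrix V V ℝ) (v : V) : Reaches B v v := ⟨0, by simp⟩

lemma reaches_trans {B : Matrix V V ℝ} (hB : ∀ v w, 0 ≤ B v w) {u v w : V}
    (h1 : Reaches B u v) (h2 : Reaches B v w) : Reaches B u w := by
  obtain ⟨m, hm⟩ := h1
  obtain ⟨n, hn⟩ := h2
  refine ⟨m + n, ?_⟩
  rw [pow_add, Matrix.mul_apply]
  exact (mul_pos hm hn).trans_le (Finset.single_le_sum (f := fun x => (B ^ m) u x * (B ^ n) x w)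
    (fun x _ => mul_nonneg (pow_nonneg_entry hB m u x) (pow_nonneg_entry hB n x w))
    (Finset.mem_univ v))

lemma reaches_edge {B : Matrix V V ℝ} (hB : ∀ v w, 0 ≤ B v w) {v w : V} (h : B v w ≠ 0) :
    Reaches B v w := ⟨1, by rw [pow_one]; exact lt_of_le_of_ne (hB v w) h.symm⟩

lemma isHarmonic_iff {B : Matrix V V ℝ} {f : V → ℝ} : IsHarmonic B f ↔ B.mulVec f = f := by
  constructor
  · intro h; funext v; exact h v
  · intro h v; exact congrFun h v

/-- An equivalence class. -/
def IsCls (B : Matrix V V ℝ) (C : Set V) : Prop := ∃ v, C = {w | Reaches B v w ∧ Reaches B w v}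

section cls

lemma cls_reaches {B : Matrix V V ℝ} (hB : ∀ v w, 0 ≤ B v w) {C : Set V} (hC : IsCls B C)
    {v w : V} (hv : v ∈ C) (hw : w ∈ C) : Reaches B v w := by
  obtain ⟨u, rfl⟩ := hC
  exact reaches_trans hB hv.2 hw.1

lemma cls_mem {B : Matrix V V ℝ} (hB : ∀ v w, 0 ≤ B v w) {C : Set V} (hC : IsCls B C)
    {v w : V} (hv : v ∈ C) (h : Reaches B v w) (hw : w ∈ closureSet B C) : w ∈ C := by
  obtain ⟨u, rfl⟩ := hC
  obtain ⟨x, hx, hwx⟩ := hw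
  exact ⟨reaches_trans hB hv.1 h, reaches_trans hB hwx hx.2⟩

lemma cls_closure_back {B : Matrix V V ℝ} (hB : ∀ v w, 0 ≤ B v w) {C : Set V} (hC : IsCls B C)
    {v w : V} (h : Reaches B v w) (hw : w ∈ closureSet B C) :
    v ∈ closureSet B C := by
  obtain ⟨x, hx, hwx⟩ := hw
  exact ⟨x, hx, reaches_trans hB h hwx⟩

lemma cls_sub {B : Matrix V V ℝ} (hB : ∀ v w, 0 ≤ B v w) {C : Set V} (hC : IsCls B C)
    {v : V} (hv : v ∈ C) : v ∈ closureSet B C := ⟨v, hv, reaches_self B v⟩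

lemma cls_edge_zero {B : Matrix V V ℝ} (hB : ∀ v w, 0 ≤ B v w) {C : Set V} (hC : IsCls B C)
    {v w : V} (hv : v ∈ C) (hw : w ∈ closureSet B C) (hw' : w ∉ C) :
    B v w = 0 := by
  by_contra h
  exact hw' (cls_mem hB hC hv (reaches_edge hB h) hw)

lemma cls_out_zero {B : Matrix V V ℝ} (hB : ∀ v w, 0 ≤ B v w) {C : Set V} (hC : IsCls B C)
    {v w : V} (hv : v ∉ closureSet B C) (hw : w ∈ closureSet B C) :
    B v w = 0 := by
  by_contra h
  exact hv (cls_closure_back hB hC (reaches_edge hB h) hw)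

lemma phi_unique {B : Matrix V V ℝ} (hB : ∀ v w, 0 ≤ B v w) {C : Set V} (hC : IsCls B C)
    (hD : specRadOn B (closureSet B C \ C) < 1) {φ x : V → ℝ}
    (hφ : IsPhiC B C φ) (hx1 : ∑ v, x v = 1) (hx : IsHarmonic B x)
    (hxs : ∀ v, v ∉ closureSet B C → x v = 0) : x = φ := by
  classical
  obtain ⟨hφ0, hφ1, hφh, -, hφs⟩ := hφ
  have hne : C.Nonempty := by
    obtain ⟨v, rfl⟩ := hC
    exact ⟨v, reaches_self B v, reaches_self B v⟩
  have hφpos : ∀ v ∈ C, 0 < φ v := fun v hv =>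
    lt_of_le_of_ne (hφ0 v) ((hφs v).2 (cls_sub hB hC hv)).symm
  have hφz : ∀ v, v ∉ closureSet B C → φ v = 0 := fun v hv => by
    by_contra h; exact hv ((hφs v).1 h)
  obtain ⟨v0, hv0, hmin⟩ := Set.exists_min_image C (fun v => x v / φ v) (Set.toFinite C) hne
  set t := x v0 / φ v0 with ht
  set u : V → ℝ := x - t • φ with hu
  have huB : B.mulVec u = u := by
    rw [hu, Matrix.mulVec_sub, Matrix.mulVec_smul, isHarmonic_iff.1 hx, isHarmonic_iff.1 hφh]
  have huz : ∀ v, v ∉ closureSet B C → u v = 0 := fun v hv => by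
    simp [hu, hxs v hv, hφz v hv]
  have huC : ∀ v ∈ C, 0 ≤ u v := fun v hv => by
    have := (le_div_iff₀ (hφpos v hv)).1 (hmin v hv)
    simp only [hu, Pi.sub_apply, Pi.smul_apply, smul_eq_mul]
    linarith
  have hu0 : u v0 = 0 := by
    simp only [hu, Pi.sub_apply, Pi.smul_apply, smul_eq_mul, ht]
    rw [div_mul_cancel₀ _ (hφpos v0 hv0).ne', sub_self]
  have huCz : ∀ v ∈ C, u v = 0 := by
    intro w hw
    obtain ⟨n, hn⟩ := cls_reaches hB hC hv0 hw
    have h1 : ∑ w, (B ^ n) v0 w * u w = 0 := by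
      have := congrFun (pow_mulVec_eq huB n) v0
      rw [hu0] at this
      exact this
    have h2 := (Finset.sum_eq_zero_iff_of_nonneg ?_).1 h1 w (Finset.mem_univ w)
    · exact (mul_eq_zero.1 h2).resolve_left hn.ne'
    · intro z _
      by_cases hz : z ∈ closureSet B C
      · rcases (pow_nonneg_entry hB n v0 z).eq_or_lt with h | h
        · rw [← h, zero_mul]
        · exact mul_nonneg h.le (huC z (cls_mem hB hC hv0 ⟨n, h⟩ hz))
      · rw [huz z hz, mul_zero]
  have huM : (restr B (closureSet B C \ C)).mulVec u = u := by
    funext v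
    by_cases hv : v ∈ closureSet B C \ C
    · conv_rhs => rw [← huB]
      refine Finset.sum_congr rfl fun w _ => ?_
      show restr B (closureSet B C \ C) v w * u w = B v w * u w
      by_cases hw : w ∈ closureSet B C \ C
      · rw [restr_apply hv hw]
      · have : u w = 0 := by
          by_cases h : w ∈ C
          · exact huCz w h
          · exact huz w fun h' => hw ⟨h', h⟩
        rw [this, mul_zero, mul_zero]
    · have : u v = 0 := by
        by_cases h : v ∈ C
        · exact huCz v h
        · exact huz v fun h' => hv ⟨h', h⟩
      rw [this]
      refine Finset.sum_eq_zero fun w _ => ?_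
      show restr B (closureSet B C \ C) v w * u w = 0
      rw [restr_zero v w (Or.inl hv), zero_mul]
  rw [specRadOn_eq] at hD
  have huall : u = 0 := by
    funext v
    have h1 : Tendsto (fun n : ℕ => ((restr B (closureSet B C \ C) ^ n).mulVec u) v) atTop
        (nhds (∑ w, 0 * u w)) :=
      tendsto_finsetSum _ fun w _ =>
        ((summable_of_specRad_lt_one (restr_nonneg hB _) hD v w).tendsto_atTop_zero).mul_const _
    simp only [pow_mulVec_eq huM, zero_mul, Finset.sum_const_zero] at h1
    exact tendsto_nhds_unique tendsto_const_nhds h1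
  have hxt : x = t • φ := sub_eq_zero.1 huall
  have : t = 1 := by
    rw [hxt] at hx1
    simpa [← Finset.mul_sum, hφ1] using hx1
  rw [hxt, this, one_smul]

lemma phi_exists {B : Matrix V V ℝ} (hB : ∀ v w, 0 ≤ B v w) {C : Set V} (hC : IsCls B C)
    (h1 : specRadOn B C = 1) (hD : specRadOn B (closureSet B C \ C) < 1) :
    ∃ φ, IsPhiC B C φ := by
  classical
  rw [specRadOn_eq] at h1 hD
  obtain ⟨x, hx0, hx1, hx⟩ := perron_exists (restr_nonneg hB C) h1
  set D := closureSet B C \ C with hDdef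
  set M := restr B D with hM
  have hxz : ∀ v, v ∉ C → x v = 0 := by
    intro v hv
    rw [← hx]
    refine Finset.sum_eq_zero fun w _ => ?_
    show restr B C v w * x w = 0
    rw [restr_zero v w (Or.inl hv), zero_mul]
  have hsum := summable_of_specRad_lt_one (restr_nonneg hB D) hD
  let b : V → ℝ := fun v => if v ∈ D then (B.mulVec x) v else 0
  have hb0 : ∀ v, 0 ≤ b v := fun v => by
    simp only [b]; split_ifs
    · exact mulVec_nonneg hB hx0 v
    · exact le_rfl
  let y : V → ℝ := fun v => ∑ w, (∑' k : ℕ, (M ^ k) v w) * b w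
  have hy0 : ∀ v, 0 ≤ y v := fun v => Finset.sum_nonneg fun w _ => mul_nonneg
    (tsum_nonneg fun k => pow_nonneg_entry (restr_nonneg hB D) k v w) (hb0 w)
  have hy : ∀ v, y v = b v + (M.mulVec y) v := by
    intro v
    simp only [y]
    rw [Finset.sum_congr rfl fun w _ => by rw [neumann v w (fun v => hsum v w), add_mul],
      Finset.sum_add_distrib]
    congr 1
    · simp [Matrix.one_apply]
    · simp only [Matrix.mulVec, dotProduct, Finset.mul_sum, Finset.sum_mul]
      rw [Finset.sum_comm]
      simp only [mul_assoc]
      rfl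
  have hyz : ∀ v, v ∉ D → y v = 0 := by
    intro v hv
    rw [hy v]
    have : (M.mulVec y) v = 0 := Finset.sum_eq_zero fun w _ => by
      show M v w * y w = 0
      rw [hM, restr_zero v w (Or.inl hv), zero_mul]
    rw [this]
    simp [b, hv]
  let f : V → ℝ := x + y
  have hf0 : ∀ v, 0 ≤ f v := fun v => add_nonneg (hx0 v) (hy0 v)
  have hfz : ∀ v, v ∉ closureSet B C → f v = 0 := fun v hv => by
    simp only [f, Pi.add_apply]
    rw [hxz v fun h => hv (cls_sub hB hC h), hyz v fun h => hv h.1, add_zero]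
  have hfB : B.mulVec f = f := by
    funext v
    by_cases hv : v ∈ closureSet B C
    · by_cases hvC : v ∈ C
      · simp only [f, Pi.add_apply]
        rw [hyz v (fun h => h.2 hvC), Matrix.mulVec_add, Pi.add_apply]
        congr 1
        · conv_rhs => rw [← hx]
          refine Finset.sum_congr rfl fun w _ => ?_
          show B v w * x w = restr B C v w * x w
          by_cases hw : w ∈ C
          · rw [restr_apply hvC hw]
          · rw [hxz w hw, mul_zero, mul_zero]
        · refine Finset.sum_eq_zero fun w _ => ?_
          show B v w * y w = 0
          by_cases hw : w ∈ D
          · rw [cls_edge_zero hB hC hvC hw.1 hw.2, zero_mul]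
          · rw [hyz w hw, mul_zero]
      · have hvD : v ∈ D := ⟨hv, hvC⟩
        simp only [f, Pi.add_apply]
        rw [hxz v hvC, Matrix.mulVec_add, Pi.add_apply, hy v, zero_add]
        congr 1
        · simp [b, hvD]
        · refine Finset.sum_congr rfl fun w _ => ?_
          show B v w * y w = M v w * y w
          by_cases hw : w ∈ D
          · rw [hM, restr_apply hvD hw]
          · rw [hyz w hw, mul_zero, mul_zero]
    · rw [hfz v hv]
      refine Finset.sum_eq_zero fun w _ => ?_
      show B v w * f w = 0
      by_cases hw : w ∈ closureSet B C
      · rw [cls_out_zero hB hC hv hw, zero_mul]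
      · rw [hfz w hw, mul_zero]
  have hu : ∃ u, 0 < x u := by
    by_contra h
    push Not at h
    have : ∑ v, x v ≤ 0 := Finset.sum_nonpos fun v _ => h v
    linarith
  obtain ⟨u, hu⟩ := hu
  have huC : u ∈ C := by
    by_contra h
    rw [hxz u h] at hu
    exact lt_irrefl _ hu
  have hfu : 0 < f u := add_pos_of_pos_of_nonneg hu (hy0 u)
  have hfpos : ∀ v ∈ closureSet B C, 0 < f v := by
    rintro v ⟨w, hw, hvw⟩
    obtain ⟨n, hn⟩ := reaches_trans hB hvw (cls_reaches hB hC hw huC)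
    rw [← pow_mulVec_eq hfB n]
    exact (mul_pos hn hfu).trans_le (entry_mul_le_mulVec (pow_nonneg_entry hB n) hf0 v u)
  set F := ∑ v, f v with hF
  have hFpos : 0 < F := hfu.trans_le (Finset.single_le_sum (fun w _ => hf0 w) (Finset.mem_univ u))
  have hgB : B.mulVec (F⁻¹ • f) = F⁻¹ • f := by rw [Matrix.mulVec_smul, hfB]
  refine ⟨F⁻¹ • f, fun v => mul_nonneg (by positivity) (hf0 v), ?_, isHarmonic_iff.2 hgB, ?_, ?_⟩
  · simp only [Pi.smul_apply, smul_eq_mul]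
    rw [← Finset.mul_sum, ← hF, inv_mul_cancel₀ hFpos.ne']
  · intro v hv
    conv_rhs => rw [← hgB]
    refine Finset.sum_congr rfl fun w _ => ?_
    show _ = B v w * (F⁻¹ • f) w
    by_cases hw : w ∈ C
    · rw [Set.indicator_of_mem hw]
    · rw [Set.indicator_of_notMem hw]
      by_cases hw' : w ∈ closureSet B C
      · rw [cls_edge_zero hB hC hv hw' hw, zero_mul]
      · simp [hfz w hw']
  · intro v
    constructor
    · intro h
      by_contra hv
      exact h (by simp [hfz v hv])
    · intro hv
      exact (mul_pos (inv_pos.2 hFpos) (hfpos v hv)).ne'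

end cls

/-- The set of normalized almost harmonic vectors. -/
def ahSet (B : Matrix V V ℝ) : Set (V → ℝ) :=
  {ψ : V → ℝ | (∀ v, 0 ≤ ψ v) ∧ (∑ v, ψ v = 1) ∧ IsAlmostHarmonic B ψ}

lemma ah_iff {B : Matrix V V ℝ} {f : V → ℝ} :
    IsAlmostHarmonic B f ↔ ∀ v, ¬ IsSink B v → (B.mulVec f) v = f v := Iff.rfl

lemma sink_mulVec {B : Matrix V V ℝ} {v : V} (h : IsSink B v) (f : V → ℝ) :
    (B.mulVec f) v = 0 :=
  Finset.sum_eq_zero fun w _ => by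
    show B v w * f w = 0
    rw [h w, zero_mul]

lemma ah_smul {B : Matrix V V ℝ} {f : V → ℝ} (h : IsAlmostHarmonic B f) (c : ℝ) :
    IsAlmostHarmonic B (c • f) := by
  rw [ah_iff] at h ⊢
  intro v hv
  rw [Matrix.mulVec_smul, Pi.smul_apply, Pi.smul_apply, h v hv]

lemma ah_add {B : Matrix V V ℝ} {f g : V → ℝ} (h : IsAlmostHarmonic B f)
    (h' : IsAlmostHarmonic B g) : IsAlmostHarmonic B (f + g) := by
  rw [ah_iff] at h h' ⊢
  intro v hv
  rw [Matrix.mulVec_add, Pi.add_apply, Pi.add_apply, h v hv, h' v hv]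

lemma ah_sub {B : Matrix V V ℝ} {f g : V → ℝ} (h : IsAlmostHarmonic B f)
    (h' : IsAlmostHarmonic B g) : IsAlmostHarmonic B (f - g) := by
  rw [ah_iff] at h h' ⊢
  intro v hv
  rw [Matrix.mulVec_sub, Pi.sub_apply, Pi.sub_apply, h v hv, h' v hv]

lemma ah_harmonic {B : Matrix V V ℝ} {f : V → ℝ} (h : IsAlmostHarmonic B f)
    (h0 : ∀ v, IsSink B v → f v = 0) : B.mulVec f = f := by
  funext v
  by_cases hv : IsSink B v
  · rw [sink_mulVec hv, h0 v hv]
  · exact h v hv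

lemma ahSet_convex (B : Matrix V V ℝ) : Convex ℝ (ahSet B) := by
  rintro x ⟨hx0, hx1, hx⟩ y ⟨hy0, hy1, hy⟩ a b ha hb hab
  refine ⟨fun v => add_nonneg (mul_nonneg ha (hx0 v)) (mul_nonneg hb (hy0 v)), ?_,
    ah_add (ah_smul hx a) (ah_smul hy b)⟩
  simp [Finset.sum_add_distrib, ← Finset.mul_sum, hx1, hy1, hab]

lemma extreme_of {B : Matrix V V ℝ} {ψ : V → ℝ} (hψ : ψ ∈ ahSet B)
    (h : ∀ x ∈ ahSet B, ∀ c : ℝ, (∀ v, x v ≤ c * ψ v) → x = ψ) :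
    ψ ∈ Set.extremePoints ℝ (ahSet B) := by
  rw [mem_extremePoints]
  refine ⟨hψ, fun x hx y hy hxy => ?_⟩
  obtain ⟨a, b, ha, hb, hab, rfl⟩ := hxy
  constructor
  · refine h x hx a⁻¹ fun v => ?_
    rw [le_inv_mul_iff₀ ha]
    have := mul_nonneg hb.le (hy.1 v)
    simp only [Pi.add_apply, Pi.smul_apply, smul_eq_mul]
    linarith
  · refine h y hy b⁻¹ fun v => ?_
    rw [le_inv_mul_iff₀ hb]
    have := mul_nonneg ha.le (hx.1 v)
    simp only [Pi.add_apply, Pi.smul_apply, smul_eq_mul]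
    linarith

lemma of_extreme {B : Matrix V V ℝ} {ψ χ : V → ℝ} (hψ : ψ ∈ Set.extremePoints ℝ (ahSet B))
    (hχ0 : ∀ v, 0 ≤ χ v) (hχ : IsAlmostHarmonic B χ) (hle : ∀ v, χ v ≤ ψ v)
    {u : V} (hu : 0 < χ u) : ∃ c : ℝ, 0 < c ∧ χ = c • ψ := by
  rw [mem_extremePoints] at hψ
  obtain ⟨⟨hψ0, hψ1, hψh⟩, hext⟩ := hψ
  set c := ∑ v, χ v with hc
  have hc0 : 0 < c := hu.trans_le (Finset.single_le_sum (fun w _ => hχ0 w) (Finset.mem_univ u))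
  have hc1 : c ≤ 1 := by rw [← hψ1]; exact Finset.sum_le_sum fun v _ => hle v
  refine ⟨c, hc0, ?_⟩
  rcases hc1.eq_or_lt with h1 | h1
  · rw [h1, one_smul]
    have hz : ∑ v, (ψ v - χ v) = 0 := by
      rw [Finset.sum_sub_distrib, hψ1, ← hc, h1, sub_self]
    have := (Finset.sum_eq_zero_iff_of_nonneg fun v _ => sub_nonneg.2 (hle v)).1 hz
    funext v
    linarith [this v (Finset.mem_univ v)]
  · have hd : 0 < 1 - c := by linarith
    have := (hext (c⁻¹ • χ) ⟨fun v => mul_nonneg (by positivity) (hχ0 v), ?_, ah_smul hχ _⟩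
      ((1 - c)⁻¹ • (ψ - χ)) ⟨fun v => mul_nonneg (by positivity) (sub_nonneg.2 (hle v)), ?_,
        ah_smul (ah_sub hψh hχ) _⟩ ⟨c, 1 - c, hc0, hd, by ring, ?_⟩).1
    · rw [← this, smul_inv_smul₀ hc0.ne']
    · simp only [Pi.smul_apply, smul_eq_mul]
      rw [← Finset.mul_sum, ← hc, inv_mul_cancel₀ hc0.ne']
    · simp only [Pi.smul_apply, smul_eq_mul, Pi.sub_apply]
      rw [← Finset.mul_sum, Finset.sum_sub_distrib, hψ1, ← hc, inv_mul_cancel₀ hd.ne']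
    · rw [smul_inv_smul₀ hc0.ne', smul_inv_smul₀ hd.ne']
      abel

section sinks

/-- The unnormalized Green function. -/
noncomputable def green (B : Matrix V V ℝ) (s : V) : V → ℝ := fun v => ∑' n : ℕ, (B ^ n) v s

lemma green_nonneg {B : Matrix V V ℝ} (hB : ∀ v w, 0 ≤ B v w)
    (s v : V) : 0 ≤ green B s v := tsum_nonneg fun n => pow_nonneg_entry hB n v s

lemma green_eq {B : Matrix V V ℝ} (hB : ∀ v w, 0 ≤ B v w)
    {s : V} (hs : IsSummableSink B s) (v : V) :
    green B s v = (1 : Matrix V V ℝ) v s + (B.mulVec (green B s)) v :=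
  neumann v s hs.2

lemma green_self {B : Matrix V V ℝ} (hB : ∀ v w, 0 ≤ B v w)
    {s : V} (hs : IsSummableSink B s) : green B s s = 1 := by
  rw [green_eq hB hs, sink_mulVec hs.1]; simp

lemma green_ah {B : Matrix V V ℝ} (hB : ∀ v w, 0 ≤ B v w)
    {s : V} (hs : IsSummableSink B s) : IsAlmostHarmonic B (green B s) := by
  rw [ah_iff]
  intro v hv
  have : v ≠ s := fun h => hv (h ▸ hs.1)
  have h := green_eq hB hs v
  rw [Matrix.one_apply_ne this, zero_add] at h
  exact h.symm

lemma green_sink {B : Matrix V V ℝ} (hB : ∀ v w, 0 ≤ B v w)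
    {s v : V} (hs : IsSummableSink B s) (hv : IsSink B v) (h : v ≠ s) :
    green B s v = 0 := by
  rw [green_eq hB hs, sink_mulVec hv, Matrix.one_apply_ne h, zero_add]

lemma green_sum_pos {B : Matrix V V ℝ} (hB : ∀ v w, 0 ≤ B v w)
    {s : V} (hs : IsSummableSink B s) : 0 < ∑ v, green B s v := by
  have : green B s s ≤ ∑ v, green B s v :=
    Finset.single_le_sum (fun w _ => green_nonneg hB s w) (Finset.mem_univ s)
  rw [green_self hB hs] at this
  linarith

lemma phiSink_eq {B : Matrix V V ℝ} (hB : ∀ v w, 0 ≤ B v w)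
    (s : V) : phiSink B s = (∑ v, green B s v)⁻¹ • green B s := by
  funext v
  simp only [phiSink, green, Pi.smul_apply, smul_eq_mul]
  rw [div_eq_inv_mul]

lemma eq_phiSink {B : Matrix V V ℝ} (hB : ∀ v w, 0 ≤ B v w)
    {s : V} {x : V → ℝ} (hx : ∑ v, x v = 1) {c : ℝ}
    (h : x = c • green B s) : x = phiSink B s := by
  rw [phiSink_eq hB, h]
  congr 1
  rw [h] at hx
  simp only [Pi.smul_apply, smul_eq_mul, ← Finset.mul_sum] at hx
  exact eq_inv_of_mul_eq_one_left hx

lemma green_decomp {B : Matrix V V ℝ} (hB : ∀ v w, 0 ≤ B v w)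
    {s : V} {x : V → ℝ} (hx : IsAlmostHarmonic B x)
    (hxs : ∀ v, IsSink B v → v ≠ s → x v = 0) (hs : IsSink B s) (N : ℕ) (v : V) :
    x v = ((B ^ N).mulVec x) v + x s * ∑ n ∈ Finset.range N, (B ^ n) v s := by
  have h1 : x = B.mulVec x + x s • (Pi.single s 1 : V → ℝ) := by
    funext w
    by_cases hw : IsSink B w
    · by_cases hws : w = s
      · subst hws
        simp [sink_mulVec hw]
      · simp [sink_mulVec hw, hws, hxs w hw hws]
    · have : w ≠ s := fun h => hw (h ▸ hs)
      simp [this, (ah_iff.1 hx) w hw]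
  induction N with
  | zero => simp
  | succ N ih =>
    rw [Finset.sum_range_succ, ih]
    have h2 : ((B ^ N).mulVec x) v = ((B ^ (N + 1)).mulVec x) v + x s * (B ^ N) v s := by
      conv_lhs => rw [h1]
      rw [Matrix.mulVec_add, Matrix.mulVec_mulVec, ← pow_succ, Matrix.mulVec_smul,
        Matrix.mulVec_single_one]
      simp
    rw [h2]; ring

lemma phiSink_extreme {B : Matrix V V ℝ} (hB : ∀ v w, 0 ≤ B v w)
    {s : V} (hs : IsSummableSink B s) :
    phiSink B s ∈ Set.extremePoints ℝ (ahSet B) := by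
  have hpos := green_sum_pos hB hs
  refine extreme_of ⟨?_, ?_, ?_⟩ ?_
  · intro v
    rw [phiSink_eq hB]
    exact mul_nonneg (by positivity) (green_nonneg hB s v)
  · rw [phiSink_eq hB]
    simp only [Pi.smul_apply, smul_eq_mul]
    rw [← Finset.mul_sum, inv_mul_cancel₀ hpos.ne']
  · rw [phiSink_eq hB]
    exact ah_smul (green_ah hB hs) _
  · rintro x ⟨hx0, hx1, hx⟩ c hc
    have hc' : ∀ v, x v ≤ (c * (∑ v, green B s v)⁻¹) * green B s v := fun v => by
      have := hc v
      rw [phiSink_eq hB] at this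
      simpa [mul_assoc] using this
    set d := c * (∑ v, green B s v)⁻¹
    have hxs : ∀ v, IsSink B v → v ≠ s → x v = 0 := fun v hv hvs => by
      have := hc' v
      rw [green_sink hB hs hv hvs, mul_zero] at this
      exact le_antisymm this (hx0 v)
    refine eq_phiSink hB hx1 (c := x s) ?_
    funext v
    have hg1 : ∀ N : ℕ, ((B ^ N).mulVec (green B s)) v =
        green B s v - ∑ n ∈ Finset.range N, (B ^ n) v s := fun N => by
      have := green_decomp hB (green_ah hB hs)
        (fun v hv hvs => green_sink hB hs hv hvs) hs.1 N v
      rw [green_self hB hs] at this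
      linarith
    have ht : Tendsto (fun N : ℕ => ∑ n ∈ Finset.range N, (B ^ n) v s) atTop
        (nhds (green B s v)) := (hs.2 v).hasSum.tendsto_sum_nat
    have h0 : Tendsto (fun N : ℕ => ((B ^ N).mulVec x) v) atTop (nhds 0) := by
      refine squeeze_zero (g := fun N => d * (green B s v - ∑ n ∈ Finset.range N, (B ^ n) v s))
        (fun N => mulVec_nonneg (pow_nonneg_entry hB N) hx0 v) (fun N => ?_) ?_
      · rw [← hg1]
        have := mulVec_mono (pow_nonneg_entry hB N) (f := x) (g := d • green B s) hc' v
        rwa [Matrix.mulVec_smul] at this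
      · simpa using (ht.const_sub (green B s v)).const_mul d
    have h1 := h0.add (ht.const_mul (x s))
    rw [zero_add] at h1
    refine tendsto_nhds_unique ?_ h1
    refine tendsto_const_nhds.congr fun N => green_decomp hB hx hxs hs.1 N v

lemma extreme_sink {B : Matrix V V ℝ} (hB : ∀ v w, 0 ≤ B v w)
    {ψ : V → ℝ} (hψ : ψ ∈ Set.extremePoints ℝ (ahSet B)) {s : V}
    (hs : IsSink B s) (hψs : 0 < ψ s) : IsSummableSink B s ∧ ψ = phiSink B s := by
  obtain ⟨hψ0, hψ1, hψh⟩ := (mem_extremePoints.1 hψ).1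
  have h1 : ∀ w, (B.mulVec ψ + ψ s • (Pi.single s 1 : V → ℝ)) w ≤ ψ w := by
    intro w
    by_cases hw : IsSink B w
    · by_cases hws : w = s
      · subst hws
        simp [sink_mulVec hw]
      · simp [sink_mulVec hw, hws, hψ0 w]
    · have : w ≠ s := fun h => hw (h ▸ hs)
      simp [this, (ah_iff.1 hψh) w hw]
  have h2 : ∀ (N : ℕ) (v : V),
      ((B ^ N).mulVec ψ) v + ψ s * ∑ n ∈ Finset.range N, (B ^ n) v s ≤ ψ v := by
    intro N v
    induction N with
    | zero => simp
    | succ N ih =>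
      rw [Finset.sum_range_succ]
      have h2 : ((B ^ (N + 1)).mulVec ψ) v + ψ s * (B ^ N) v s ≤ ((B ^ N).mulVec ψ) v := by
        have := mulVec_mono (pow_nonneg_entry hB N) h1 v
        rw [Matrix.mulVec_add, Matrix.mulVec_mulVec, ← pow_succ, Matrix.mulVec_smul,
          Matrix.mulVec_single_one] at this
        simpa using this
      linarith
  have h3 : ∀ (N : ℕ) (v : V), ∑ n ∈ Finset.range N, (B ^ n) v s ≤ ψ v / ψ s := by
    intro N v
    rw [le_div_iff₀ hψs]
    have := h2 N v
    have := mulVec_nonneg (pow_nonneg_entry hB N) hψ0 v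
    linarith
  have hss : IsSummableSink B s := ⟨hs, fun v =>
    summable_of_sum_range_le (fun n => pow_nonneg_entry hB n v s) (fun N => h3 N v)⟩
  refine ⟨hss, ?_⟩
  have h4 : ∀ v, green B s v ≤ ψ v / ψ s := fun v =>
    Real.tsum_le_of_sum_range_le (fun n => pow_nonneg_entry hB n v s) (fun N => h3 N v)
  obtain ⟨c, hc0, hc⟩ := of_extreme hψ (χ := ψ s • green B s) (u := s)
    (fun v => mul_nonneg hψs.le (green_nonneg hB s v)) (ah_smul (green_ah hB hss) _)
    (fun v => by
      have := (le_div_iff₀ hψs).1 (h4 v)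
      simp only [Pi.smul_apply, smul_eq_mul]
      linarith)
    (by simp [green_self hB hss, hψs])
  refine eq_phiSink hB hψ1 (c := c⁻¹ * ψ s) ?_
  rw [mul_smul, hc, inv_smul_smul₀ hc0.ne']

lemma empty_restr_lt {B : Matrix V V ℝ} (hB : ∀ v w, 0 ≤ B v w)
    {D : Set V} (h : D.Nonempty → specRadOn B D < 1) : specRadOn B D < 1 := by
  by_cases hD : D.Nonempty
  · exact h hD
  · rw [specRadOn_eq]
    rw [Set.not_nonempty_iff_eq_empty] at hD
    subst hD
    exact specRad_lt_one_of (restr_nonneg hB _) ∅ restr_zero 0 0 (by simp) (by simp) (by simp)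

lemma phiComp_spec {B : Matrix V V ℝ} (hB : ∀ v w, 0 ≤ B v w)
    {C : Set V} (h : IsHarmonicComponent B C) : IsPhiC B C (phiComp B C) := by
  have hex : ∃ φ : V → ℝ, IsPhiC B C φ :=
    phi_exists hB h.1.1 h.2.1 (empty_restr_lt hB h.2.2)
  unfold phiComp
  rw [dif_pos hex]
  exact hex.choose_spec

lemma phiComp_extreme {B : Matrix V V ℝ} (hB : ∀ v w, 0 ≤ B v w)
    {C : Set V} (h : IsHarmonicComponent B C) :
    phiComp B C ∈ Set.extremePoints ℝ (ahSet B) := by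
  have hφ := phiComp_spec hB h
  obtain ⟨hφ0, hφ1, hφh, -, hφs⟩ := id hφ
  refine extreme_of ⟨hφ0, hφ1, fun v _ => hφh v⟩ ?_
  rintro x ⟨hx0, hx1, hx⟩ c hc
  have hz : ∀ v, phiComp B C v = 0 → x v = 0 := fun v hv => by
    have := hc v
    rw [hv, mul_zero] at this
    exact le_antisymm this (hx0 v)
  refine phi_unique hB h.1.1 (empty_restr_lt hB h.2.2) hφ hx1
    (isHarmonic_iff.2 (ah_harmonic hx fun v hv => hz v ?_)) (fun v hv => hz v ?_)
  · rw [← hφh v]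
    exact sink_mulVec hv _
  · by_contra h'
    exact hv ((hφs v).1 h')

end sinks

lemma specRad_eq_one_of {M : Matrix V V ℝ} (hM : ∀ v w, 0 ≤ M v w) (D : Set V)
    (hD : ∀ v w, v ∉ D ∨ w ∉ D → M v w = 0) (S : V → ℝ) (hS : ∀ v, 0 ≤ S v)
    (hSpos : ∀ v ∈ D, 0 < S v) (h : M.mulVec S = S) (hsum : ∑ v, S v ≤ 1) {v : V}
    (hv : 0 < S v) : specRad M = 1 := by
  apply le_antisymm
  · have hsum0 : 0 ≤ ∑ i, ∑ j, S i / S j :=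
      Finset.sum_nonneg fun i _ => Finset.sum_nonneg fun j _ => div_nonneg (hS i) (hS j)
    refine specRad_le_of M ((∑ i, ∑ j, S i / S j) + 1) 1 (by linarith) zero_le_one ?_
    filter_upwards [eventually_ge_atTop 1] with k hk
    obtain ⟨k, rfl⟩ : ∃ j, k = j + 1 := ⟨k - 1, by omega⟩
    have : ahNorm (M ^ (k + 1)) ≤ ∑ i, ∑ j, S i / S j := by
      unfold ahNorm
      refine Finset.sum_le_sum fun i _ => Finset.sum_le_sum fun j _ => ?_
      rw [abs_of_nonneg (pow_nonneg_entry hM _ i j)]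
      by_cases hj : j ∈ D
      · have h1 := entry_mul_le_mulVec (pow_nonneg_entry hM (k + 1)) hS i j
        rw [pow_mulVec_eq h] at h1
        rwa [le_div_iff₀ (hSpos j hj)]
      · rw [pow_succ_zero hD k i j (Or.inr hj)]
        exact div_nonneg (hS i) (hS j)
    rw [one_pow, mul_one]
    linarith
  · refine one_le_specRad_of M (S v) hv fun k => ?_
    have h1 : S v = ∑ w, (M ^ k) v w * S w := (congrFun (pow_mulVec_eq h k) v).symm
    calc S v = ∑ w, (M ^ k) v w * S w := h1
      _ ≤ ∑ w, ahNorm (M ^ k) * S w := Finset.sum_le_sum fun w _ =>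
          mul_le_mul_of_nonneg_right ((le_abs_self _).trans (le_ahNorm _ v w)) (hS w)
      _ = ahNorm (M ^ k) * ∑ w, S w := by rw [Finset.mul_sum]
      _ ≤ ahNorm (M ^ k) * 1 := mul_le_mul_of_nonneg_left hsum (ahNorm_nonneg _)
      _ = ahNorm (M ^ k) := mul_one _

lemma exists_terminal {B : Matrix V V ℝ} (hB : ∀ v w, 0 ≤ B v w) (S : Set V) (hS : S.Nonempty) :
    ∃ v ∈ S, ∀ w ∈ S, Reaches B v w → Reaches B w v := by
  obtain ⟨v, hv, hmin⟩ := Set.exists_min_image S (fun v => {w | w ∈ S ∧ Reaches B v w}.ncard)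
    (Set.toFinite S) hS
  refine ⟨v, hv, fun w hw hvw => ?_⟩
  have hsub : {u | u ∈ S ∧ Reaches B w u} ⊆ {u | u ∈ S ∧ Reaches B v u} :=
    fun u hu => ⟨hu.1, reaches_trans hB hvw hu.2⟩
  have heq := Set.eq_of_subset_of_ncard_le hsub (hmin w hw) (Set.toFinite _)
  have : v ∈ {u | u ∈ S ∧ Reaches B v u} := ⟨hv, reaches_self B v⟩
  rw [← heq] at this
  exact this.2

lemma extreme_harmonic {B : Matrix V V ℝ} (hB : ∀ v w, 0 ≤ B v w) {ψ : V → ℝ}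
    (hψ : ψ ∈ Set.extremePoints ℝ (ahSet B)) (hs : ∀ s, IsSink B s → ψ s = 0) :
    ∃ C : Set V, IsHarmonicComponent B C ∧ ψ = phiComp B C := by
  classical
  obtain ⟨hψ0, hψ1, hψh⟩ := (mem_extremePoints.1 hψ).1
  have hψB : B.mulVec ψ = ψ := ah_harmonic hψh hs
  have hback : ∀ a b, Reaches B a b → 0 < ψ b → 0 < ψ a := by
    rintro a b ⟨n, hn⟩ hb
    rw [← pow_mulVec_eq hψB n]
    exact (mul_pos hn hb).trans_le (entry_mul_le_mulVec (pow_nonneg_entry hB n) hψ0 a b)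
  have hne : {v | 0 < ψ v}.Nonempty := by
    by_contra h
    rw [Set.not_nonempty_iff_eq_empty] at h
    have : ∑ v, ψ v ≤ 0 := Finset.sum_nonpos fun v _ => by
      by_contra hv
      have : v ∈ {v | 0 < ψ v} := not_le.1 hv
      rw [h] at this
      exact this
    linarith
  obtain ⟨v, hv, hterm⟩ := exists_terminal hB _ hne
  replace hv : 0 < ψ v := hv
  set C : Set V := {w | Reaches B v w ∧ Reaches B w v} with hCdef
  have hC : IsCls B C := ⟨v, rfl⟩
  have hvC : v ∈ C := ⟨reaches_self B v, reaches_self B v⟩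
  have hCpos : ∀ w ∈ C, 0 < ψ w := fun w hw => hback w v hw.2 hv
  have hCterm : ∀ u ∈ C, ∀ w, w ∉ C → B u w * ψ w = 0 := by
    intro u hu w hw
    by_contra h
    have h1 : B u w ≠ 0 := left_ne_zero_of_mul h
    have h2 : 0 < ψ w := lt_of_le_of_ne (hψ0 w) (right_ne_zero_of_mul h).symm
    have h3 : Reaches B v w := reaches_trans hB hu.1 (reaches_edge hB h1)
    exact hw ⟨h3, hterm w h2 h3⟩
  set g : V → ℝ := C.indicator ψ with hg
  have hgC : ∀ w ∈ C, g w = ψ w := fun w hw => Set.indicator_of_mem hw _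
  have hgz : ∀ w, w ∉ C → g w = 0 := fun w hw => Set.indicator_of_notMem hw _
  have hg0 : ∀ w, 0 ≤ g w := fun w => Set.indicator_nonneg (fun w _ => hψ0 w) w
  have hgle : ∀ w, g w ≤ ψ w := fun w => by
    by_cases hw : w ∈ C
    · rw [hgC w hw]
    · rw [hgz w hw]; exact hψ0 w
  have hBg : ∀ u ∈ C, (B.mulVec g) u = ψ u := by
    intro u hu
    rw [← congrFun hψB u]
    refine Finset.sum_congr rfl fun w _ => ?_
    show B u w * g w = B u w * ψ w
    by_cases hw : w ∈ C
    · rw [hgC w hw]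
    · rw [hgz w hw, mul_zero, hCterm u hu w hw]
  have hgB : ∀ w, g w ≤ (B.mulVec g) w := fun w => by
    by_cases hw : w ∈ C
    · rw [hgC w hw, hBg w hw]
    · rw [hgz w hw]; exact mulVec_nonneg hB hg0 w
  set f : ℕ → V → ℝ := fun n => (B ^ n).mulVec g with hf
  have hfmono : ∀ w, Monotone fun n => f n w := fun w => monotone_nat_of_le_succ fun n => by
    have := mulVec_mono (pow_nonneg_entry hB n) hgB w
    rwa [Matrix.mulVec_mulVec, ← pow_succ] at this
  have hfle : ∀ n w, f n w ≤ ψ w := fun n w => by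
    have := mulVec_mono (pow_nonneg_entry hB n) hgle w
    rwa [pow_mulVec_eq hψB] at this
  set χ : V → ℝ := fun w => ⨆ n, f n w with hχ
  have hlim : ∀ w, Tendsto (fun n => f n w) atTop (nhds (χ w)) := fun w =>
    tendsto_atTop_ciSup (hfmono w) ⟨ψ w, by rintro _ ⟨n, rfl⟩; exact hfle n w⟩
  have hχle : ∀ w, χ w ≤ ψ w := fun w => le_of_tendsto' (hlim w) fun n => hfle n w
  have hgχ : ∀ w, g w ≤ χ w := fun w =>
    ge_of_tendsto' (hlim w) fun n => by
      have : f 0 w ≤ f n w := hfmono w (Nat.zero_le n)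
      simpa [hf] using this
  have hχB : B.mulVec χ = χ := by
    funext w
    have h1 : Tendsto (fun n => (B.mulVec (f n)) w) atTop (nhds ((B.mulVec χ) w)) :=
      tendsto_finsetSum _ fun u _ => (hlim u).const_mul _
    have h2 : Tendsto (fun n => f (n + 1) w) atTop (nhds (χ w)) :=
      (tendsto_add_atTop_iff_nat 1).2 (hlim w)
    refine tendsto_nhds_unique h1 (h2.congr fun n => ?_)
    simp only [hf]
    rw [Matrix.mulVec_mulVec, ← pow_succ']
  have hχψ : χ = ψ := by
    obtain ⟨c, -, hc⟩ := of_extreme hψ (χ := χ) (u := v) (fun w => (hg0 w).trans (hgχ w))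
      (fun w _ => congrFun hχB w) hχle (by
        have := hgχ v
        rw [hgC v hvC] at this
        linarith)
    have h1 : χ v = ψ v := le_antisymm (hχle v) (by rw [← hgC v hvC]; exact hgχ v)
    have h2 : c * ψ v = ψ v := by
      conv_rhs => rw [← h1, hc]
      rfl
    have : c = 1 := by
      have := mul_right_cancel₀ hv.ne' (h2.trans (one_mul _).symm)
      exact this
    rw [hc, this, one_smul]
  have hsupp : ∀ w, w ∉ closureSet B C → ψ w = 0 := by
    intro w hw
    have h1 : ∀ n, f n w = 0 := fun n => Finset.sum_eq_zero fun u _ => by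
      show (B ^ n) w u * g u = 0
      by_cases hu : u ∈ C
      · have : ¬ 0 < (B ^ n) w u := fun h => hw ⟨u, hu, n, h⟩
        rw [le_antisymm (not_lt.1 this) (pow_nonneg_entry hB n w u), zero_mul]
      · rw [hgz u hu, mul_zero]
    have h2 := hlim w
    simp only [h1] at h2
    rw [← hχψ]
    exact (tendsto_nhds_unique tendsto_const_nhds h2).symm
  have hclpos : ∀ w ∈ closureSet B C, 0 < ψ w := by
    rintro w ⟨u, hu, hwu⟩
    exact hback w u hwu (hCpos u hu)
  -- the component is harmonic
  have hcomp : IsComponent B C := by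
    refine ⟨hC, ?_⟩
    by_contra hcon
    push Not at hcon
    have : (B.mulVec g) v = 0 := Finset.sum_eq_zero fun w _ => by
      show B v w * g w = 0
      by_cases hw : w ∈ C
      · rw [hcon v hvC w hw, zero_mul]
      · rw [hgz w hw, mul_zero]
    rw [hBg v hvC] at this
    exact hv.ne' this
  have hrho : specRadOn B C = 1 := by
    rw [specRadOn_eq]
    refine specRad_eq_one_of (restr_nonneg hB C) C restr_zero g hg0
      (fun w hw => by rw [hgC w hw]; exact hCpos w hw) ?_
      (by rw [← hψ1]; exact Finset.sum_le_sum fun w _ => hgle w) (v := v)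
      (by rw [hgC v hvC]; exact hv)
    funext u
    by_cases hu : u ∈ C
    · rw [hgC u hu, ← hBg u hu]
      refine Finset.sum_congr rfl fun w _ => ?_
      show restr B C u w * g w = B u w * g w
      by_cases hw : w ∈ C
      · rw [restr_apply hu hw]
      · rw [hgz w hw, mul_zero, mul_zero]
    · rw [hgz u hu]
      refine Finset.sum_eq_zero fun w _ => ?_
      show restr B C u w * g w = 0
      rw [restr_zero u w (Or.inl hu), zero_mul]
  have hD : specRadOn B (closureSet B C \ C) < 1 := by
    rw [specRadOn_eq]
    set D := closureSet B C \ C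
    set M := restr B D with hM
    have hM0 := restr_nonneg hB D
    set d : V → ℝ := ψ - g with hd
    have hd0 : ∀ w, 0 ≤ d w := fun w => sub_nonneg.2 (hgle w)
    have hdpos : ∀ w ∈ D, 0 < d w := fun w hw => by
      simp only [hd, Pi.sub_apply]
      rw [hgz w hw.2, sub_zero]
      exact hclpos w hw.1
    have hMd : ∀ w, Tendsto (fun n => ((M ^ n).mulVec d) w) atTop (nhds 0) := by
      intro w
      refine squeeze_zero (g := fun n => ψ w - f n w)
        (fun n => mulVec_nonneg (pow_nonneg_entry hM0 n) hd0 w) (fun n => ?_) ?_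
      · have h1 : ((M ^ n).mulVec d) w ≤ ((B ^ n).mulVec d) w :=
          Finset.sum_le_sum fun u _ => mul_le_mul_of_nonneg_right (restr_pow_le hB D n w u) (hd0 u)
        rw [hd, Matrix.mulVec_sub (B ^ n), pow_mulVec_eq hψB] at h1
        exact h1
      · have := (hlim w).const_sub (ψ w)
        rwa [hχψ, sub_self] at this
    have hev : ∀ᶠ n : ℕ in atTop, ∀ w, w ∈ D → ((M ^ n).mulVec d) w ≤ d w / 2 := by
      rw [eventually_all]
      intro w
      by_cases hw : w ∈ D
      · filter_upwards [(hMd w).eventually (gt_mem_nhds (half_pos (hdpos w hw)))] with n hn _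
        exact hn.le
      · exact Eventually.of_forall fun _ h => absurd h hw
    obtain ⟨m, hm⟩ := hev.exists
    refine specRad_lt_one_of hM0 D restr_zero (∑ n ∈ Finset.range m, (M ^ n).mulVec d)
      (fun w => d w / 2) ?_ (fun w hw => half_pos (hdpos w hw)) ?_
    · intro w
      rw [Finset.sum_apply]
      exact Finset.sum_nonneg fun n _ => mulVec_nonneg (pow_nonneg_entry hM0 n) hd0 w
    · intro w hw
      have h1 : M.mulVec (∑ n ∈ Finset.range m, (M ^ n).mulVec d) + d =
          (∑ n ∈ Finset.range m, (M ^ n).mulVec d) + (M ^ m).mulVec d := by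
        rw [← Finset.sum_range_succ, Finset.sum_range_succ', Matrix.mulVec_sum]
        simp [Matrix.mulVec_mulVec, pow_succ']
      have h2 := congrFun h1 w
      simp only [Pi.add_apply] at h2
      have h3 := hm w hw
      linarith
  have hHC : IsHarmonicComponent B C := ⟨hcomp, hrho, fun _ => hD⟩
  exact ⟨C, hHC, phi_unique hB hC hD (phiComp_spec hB hHC) hψ1 (isHarmonic_iff.2 hψB) hsupp⟩

end helpers

/-- The normalized almost `B`-harmonic vectors form a convex set whose extreme points are
exactly the vectors `φ^C` for `C` a `B`-harmonic component together with the vectors `φ^s`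
for `s` a `B`-summable sink. -/
theorem almostHarmonic_simplex {V : Type*} [Fintype V] [Nonempty V] [DecidableEq V]
    (B : Matrix V V ℝ) (hB : ∀ v w, 0 ≤ B v w) :
    Convex ℝ {ψ : V → ℝ | (∀ v, 0 ≤ ψ v) ∧ (∑ v, ψ v = 1) ∧ IsAlmostHarmonic B ψ} ∧
    Set.extremePoints ℝ
        {ψ : V → ℝ | (∀ v, 0 ≤ ψ v) ∧ (∑ v, ψ v = 1) ∧ IsAlmostHarmonic B ψ}
      = {φ : V → ℝ | ∃ C : Set V, IsHarmonicComponent B C ∧ φ = phiComp B C} ∪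
        {φ : V → ℝ | ∃ s : V, IsSummableSink B s ∧ φ = phiSink B s} := by
  refine ⟨ahSet_convex B, ?_⟩
  apply Set.Subset.antisymm
  · intro ψ hψ
    by_cases h : ∀ s, IsSink B s → ψ s = 0
    · exact Or.inl (extreme_harmonic hB hψ h)
    · push Not at h
      obtain ⟨s, hs, hne⟩ := h
      have h0 := (mem_extremePoints.1 hψ).1.1 s
      exact Or.inr ⟨s, extreme_sink hB hψ hs (lt_of_le_of_ne h0 hne.symm)⟩
  · rintro φ (⟨C, hC, rfl⟩ | ⟨s, hs, rfl⟩)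
    · exact phiComp_extreme hB hC
    · exact phiSink_extreme hB hs
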